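/- Invariance of the spinning-particle equation (35) under the prolonged pseudo-orthogonal generators: let 𝐄 be given by equation (35) of the context, regarded as a smooth ℝ³-valued function of (s⁰, 𝐬, v, v′, v″) on the domain {(s⁰,𝐬) ≠ 0, Δ(v) > 0}. For a fixed pair (𝐧, 𝐪) ∈ ℝ³ × ℝ³ define the first-order differential operator X₃ (the third-order prolongation of the pseudo-orthogonal generator, acting also on the spin parameters) componentwise by X₃F = −(𝐪·𝐬) ∂_{s⁰}F + (s⁰𝐪 + 𝐧×𝐬)·∂_𝐬 F + (𝐪 + (𝐪·v)v + 𝐧×v)·∂_v F + ((𝐪·v′)v + 2(𝐪·v)v′ + 𝐧×v′)·∂_{v′} F + ((𝐪·v″)v + 3(𝐪·v′)v′ + 3(𝐪·v)v″ + 𝐧×v″)·∂_{v″} F. Then on its domain 𝐄 satisfies the identity X₃𝐄 = 𝐧×𝐄 + (𝐪·v) 𝐄 − (v·𝐄) 𝐪. -/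

import Mathlib

/-!
Call a scalar `f` of weight `k` if `X₃ f = k (𝐪·v) f`. The velocity `v` is the affine coordinate of
the line through `(1, v)`; tangent directions at `v` transform contravariantly, while `𝐄` transforms
as a covector. The cross product of two contravariant vectors of weights `j` and `k` is a covector
of weight `j + k + 1`, by Cramer's rule in `ℝ³`; lowering an index by
`a ↦ (1 + v·v) a − (a·v) v` turns a contravariant vector into a covector and raises its weight
by `2`. Since `1 + v·v`, `s⁰² + 𝐬·𝐬`, `Δ` have weights `2`, `0`, `2`, and `𝐬 − s⁰ v`, `v′` are
contravariant of weights `0`, `2`, counting weights shows that each summand of `𝐄` is a covector of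
weight `1`, up to two defects: `v″` is contravariant of weight `3` only up to `3 (𝐪·v′) v′`, and
the coefficient of the second summand has weight `-2` only up to `3 (𝐪·v′) / Δ^{3/2}`. Both defects
contribute the same multiple of `v′ × (𝐬 − s⁰ v)`, and these cancel in the difference of the first
two summands.
-/

open Matrix

noncomputable section

/-- `Δ(v) = (1 + v·v)(s⁰² + 𝐬·𝐬) − (s⁰ + 𝐬·v)²`. -/
def sDelta (s0 : ℝ) (s v : Fin 3 → ℝ) : ℝ :=
  (1 + v ⬝ᵥ v) * (s0 ^ 2 + s ⬝ᵥ s) - (s0 + s ⬝ᵥ v) ^ 2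

/-- The third-order expression (35) of the semi-classical spinning particle. -/
def spinE (s0 : ℝ) (s : Fin 3 → ℝ) (m : ℝ) (v v' v'' : Fin 3 → ℝ) : Fin 3 → ℝ :=
  (sDelta s0 s v ^ ((3 : ℝ) / 2))⁻¹ • crossProduct v'' (s - s0 • v)
    - (3 * ((s0 ^ 2 + s ⬝ᵥ s) * (v' ⬝ᵥ v) - (s0 + s ⬝ᵥ v) * (s ⬝ᵥ v'))
        / sDelta s0 s v ^ ((5 : ℝ) / 2)) • crossProduct v' (s - s0 • v)
    + (m / ((1 + v ⬝ᵥ v) ^ ((3 : ℝ) / 2) * (s0 ^ 2 + s ⬝ᵥ s) ^ ((3 : ℝ) / 2))) •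
        ((1 + v ⬝ᵥ v) • v' - (v' ⬝ᵥ v) • v)

/-- The value at the point `(s⁰, 𝐬, v, v′, v″)` of the vector field generating the
third-order prolongation `X₃` (formula (37)) of the pseudo-orthogonal generator with
group parameters `(𝐧, 𝐪)`, acting also on the spin parameters. -/
def X3vec (n q : Fin 3 → ℝ)
    (p : ℝ × (Fin 3 → ℝ) × (Fin 3 → ℝ) × (Fin 3 → ℝ) × (Fin 3 → ℝ)) :
    ℝ × (Fin 3 → ℝ) × (Fin 3 → ℝ) × (Fin 3 → ℝ) × (Fin 3 → ℝ) :=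
  ⟨-(q ⬝ᵥ p.2.1),
   p.1 • q + crossProduct n p.2.1,
   q + (q ⬝ᵥ p.2.2.1) • p.2.2.1 + crossProduct n p.2.2.1,
   (q ⬝ᵥ p.2.2.2.1) • p.2.2.1 + (2 * (q ⬝ᵥ p.2.2.1)) • p.2.2.2.1
     + crossProduct n p.2.2.2.1,
   (q ⬝ᵥ p.2.2.2.2) • p.2.2.1 + (3 * (q ⬝ᵥ p.2.2.2.1)) • p.2.2.2.1
     + (3 * (q ⬝ᵥ p.2.2.1)) • p.2.2.2.2 + crossProduct n p.2.2.2.2⟩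

section Calculus

variable {𝕜 E F G H ι : Type*} [NontriviallyNormedField 𝕜]
  [NormedAddCommGroup E] [NormedSpace 𝕜 E] [NormedAddCommGroup F] [NormedSpace 𝕜 F]
  [NormedAddCommGroup G] [NormedSpace 𝕜 G] [NormedAddCommGroup H] [NormedSpace 𝕜 H]

theorem fderiv_apply_eq_of_forall_curve {f : E → F} {x w : E} {L : F}
    (hf : DifferentiableAt 𝕜 f x)
    (h : ∀ γ : 𝕜 → E, γ 0 = x → HasDerivAt γ w 0 → HasDerivAt (fun τ => f (γ τ)) L 0) :
    fderiv 𝕜 f x w = L :=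
  (hf.hasFDerivAt.hasLineDerivAt w).unique
    (h (fun τ => x + τ • w) (by simp)
      (by simpa using ((hasDerivAt_id' (0 : 𝕜)).smul_const w).const_add x))

theorem hasDerivAt_fst_comp {γ : 𝕜 → E × F} {γ' : E × F} {t : 𝕜} (hγ : HasDerivAt γ γ' t) :
    HasDerivAt (fun τ => (γ τ).1) γ'.1 t :=
  (ContinuousLinearMap.fst 𝕜 E F).hasFDerivAt.comp_hasDerivAt t hγ

theorem hasDerivAt_snd_comp {γ : 𝕜 → E × F} {γ' : E × F} {t : 𝕜} (hγ : HasDerivAt γ γ' t) :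
    HasDerivAt (fun τ => (γ τ).2) γ'.2 t :=
  (ContinuousLinearMap.snd 𝕜 E F).hasFDerivAt.comp_hasDerivAt t hγ

theorem hasDerivAt_inv_of_mul_self {f : 𝕜 → 𝕜} {c t : 𝕜} (hf : HasDerivAt f (c * f t) t)
    (hft : f t ≠ 0) : HasDerivAt (fun τ => (f τ)⁻¹) (-c * (f t)⁻¹) t :=
  (hf.fun_inv hft).congr_deriv (by field)

theorem hasDerivAt_rpow_of_mul_self {f : ℝ → ℝ} {c t : ℝ} (hf : HasDerivAt f (c * f t) t)
    (hft : f t ≠ 0) (r : ℝ) : HasDerivAt (fun τ => f τ ^ r) (r * c * f t ^ r) t :=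
  (hf.rpow_const (p := r) (Or.inl hft)).congr_deriv (by rw [Real.rpow_sub_one hft]; field)

variable [CompleteSpace 𝕜] [FiniteDimensional 𝕜 E] [FiniteDimensional 𝕜 F] [Fintype ι]

theorem hasDerivAt_bilin_apply (B : E →ₗ[𝕜] F →ₗ[𝕜] G) {a : 𝕜 → E} {b : 𝕜 → F}
    {a' : E} {b' : F} {t : 𝕜} (ha : HasDerivAt a a' t) (hb : HasDerivAt b b' t) :
    HasDerivAt (fun τ => B (a τ) (b τ)) (B (a t) b' + B a' (b t)) t :=
  B.toContinuousBilinearMap.hasDerivAt_of_bilinear (fun _ => ha) (fun _ => hb)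

theorem differentiableAt_bilin_apply (B : E →ₗ[𝕜] F →ₗ[𝕜] G) {a : H → E} {b : H → F} {x : H}
    (ha : DifferentiableAt 𝕜 a x) (hb : DifferentiableAt 𝕜 b x) :
    DifferentiableAt 𝕜 (fun y => B (a y) (b y)) x :=
  (B.toContinuousBilinearMap.hasFDerivAt_of_bilinear ha.hasFDerivAt hb.hasFDerivAt).differentiableAt

theorem hasDerivAt_dotProduct {a b : 𝕜 → ι → 𝕜} {a' b' : ι → 𝕜} {t : 𝕜}
    (ha : HasDerivAt a a' t) (hb : HasDerivAt b b' t) :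
    HasDerivAt (fun τ => a τ ⬝ᵥ b τ) (a t ⬝ᵥ b' + a' ⬝ᵥ b t) t :=
  hasDerivAt_bilin_apply (dotProductBilin 𝕜 𝕜) ha hb

theorem hasDerivAt_crossProduct {a b : 𝕜 → Fin 3 → 𝕜} {a' b' : Fin 3 → 𝕜} {t : 𝕜}
    (ha : HasDerivAt a a' t) (hb : HasDerivAt b b' t) :
    HasDerivAt (fun τ => a τ ⨯₃ b τ) (a t ⨯₃ b' + a' ⨯₃ b t) t :=
  hasDerivAt_bilin_apply crossProduct ha hb

theorem differentiableAt_dotProduct {a b : H → ι → 𝕜} {x : H}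
    (ha : DifferentiableAt 𝕜 a x) (hb : DifferentiableAt 𝕜 b x) :
    DifferentiableAt 𝕜 (fun y => a y ⬝ᵥ b y) x :=
  differentiableAt_bilin_apply (dotProductBilin 𝕜 𝕜) ha hb

theorem differentiableAt_crossProduct {a b : H → Fin 3 → 𝕜} {x : H}
    (ha : DifferentiableAt 𝕜 a x) (hb : DifferentiableAt 𝕜 b x) :
    DifferentiableAt 𝕜 (fun y => a y ⨯₃ b y) x :=
  differentiableAt_bilin_apply crossProduct ha hb

end Calculus

section CrossProduct

variable {R : Type*} [CommRing R]

theorem dotProduct_cross_eq_neg_cross_dotProduct (n a b : Fin 3 → R) :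
    a ⬝ᵥ n ⨯₃ b = -(n ⨯₃ a ⬝ᵥ b) := by
  rw [← triple_product_permutation, dotProduct_comm, ← neg_dotProduct, cross_anticomm]

theorem triple_product_smul_eq (v a b q : Fin 3 → R) :
    (v ⬝ᵥ a ⨯₃ b) • q
      = (q ⬝ᵥ v) • (a ⨯₃ b) - (q ⬝ᵥ a) • (v ⨯₃ b) - (q ⬝ᵥ b) • (a ⨯₃ v) := by
  ext i
  fin_cases i <;> simp [dotProduct, Fin.sum_univ_three, cross_apply] <;> ring

/-- The variation under `X₃` of a contravariant vector of weight `k` at velocity `v`, such as `v′`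
(of weight `2`). Weights are counted in units of `𝐪·v`. -/
def contravariantAction (n q v : Fin 3 → R) (k : R) (a : Fin 3 → R) : Fin 3 → R :=
  n ⨯₃ a + (k * (q ⬝ᵥ v)) • a + (q ⬝ᵥ a) • v

/-- The variation under `X₃` of a covector of weight `k` at velocity `v`; it is minus the
transpose of `contravariantAction n q v (-k)`. The invariance of equation (35) says that `X₃` acts
on `𝐄` by `covariantAction n q v 1`. -/
def covariantAction (n q v : Fin 3 → R) (k : R) : (Fin 3 → R) →ₗ[R] (Fin 3 → R) :=
  crossProduct n + (k * (q ⬝ᵥ v)) • LinearMap.id - (dotProductBilin R R v).smulRight q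

variable (n q v : Fin 3 → R) (j k : R) (a b : Fin 3 → R)

theorem covariantAction_apply :
    covariantAction n q v k a = n ⨯₃ a + (k * (q ⬝ᵥ v)) • a - (v ⬝ᵥ a) • q :=
  rfl

theorem covariantAction_add_weight :
    covariantAction n q v (j + k) a = (j * (q ⬝ᵥ v)) • a + covariantAction n q v k a := by
  simp only [covariantAction_apply]
  module

theorem cross_contravariantAction_add :
    a ⨯₃ contravariantAction n q v k b + contravariantAction n q v j a ⨯₃ b
      = covariantAction n q v (j + k + 1) (a ⨯₃ b) := by
  simp only [contravariantAction, covariantAction_apply, map_add, map_smul, LinearMap.add_apply,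
    LinearMap.smul_apply, leibniz_cross n, triple_product_smul_eq]
  module

end CrossProduct

/-- The index-lowering map of the round metric in the gnomonic coordinate `v`, multiplied by
`(1 + v·v)²`. -/
def lowerIndex (v a : Fin 3 → ℝ) : Fin 3 → ℝ :=
  (1 + v ⬝ᵥ v) • a - (a ⬝ᵥ v) • v

/-- Half the derivative of `Δ` at `v` in the direction `a`; for `a = v′` it is the bracket in the
second summand of `𝐄`. -/
def sDeltaHalfDeriv (s0 : ℝ) (s v a : Fin 3 → ℝ) : ℝ :=
  (s0 ^ 2 + s ⬝ᵥ s) * (a ⬝ᵥ v) - (s0 + s ⬝ᵥ v) * (s ⬝ᵥ a)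

theorem spinE_eq (s0 : ℝ) (s : Fin 3 → ℝ) (m : ℝ) (v v' v'' : Fin 3 → ℝ) :
    spinE s0 s m v v' v'' =
      (sDelta s0 s v ^ ((3 : ℝ) / 2))⁻¹ • v'' ⨯₃ (s - s0 • v)
        - (3 * sDeltaHalfDeriv s0 s v v' / sDelta s0 s v ^ ((5 : ℝ) / 2)) • v' ⨯₃ (s - s0 • v)
        + (m / ((1 + v ⬝ᵥ v) ^ ((3 : ℝ) / 2) * (s0 ^ 2 + s ⬝ᵥ s) ^ ((3 : ℝ) / 2))) •
            lowerIndex v v' :=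
  rfl

theorem one_add_dotProduct_self_pos {ι : Type*} [Fintype ι] (v : ι → ℝ) : 0 < 1 + v ⬝ᵥ v :=
  add_pos_of_pos_of_nonneg one_pos (by simpa using dotProduct_star_self_nonneg v)

theorem spin_normSq_pos {s0 : ℝ} {s v : Fin 3 → ℝ} (hΔ : 0 < sDelta s0 s v) :
    0 < s0 ^ 2 + s ⬝ᵥ s := by
  have hmul : 0 < (1 + v ⬝ᵥ v) * (s0 ^ 2 + s ⬝ᵥ s) :=
    (sq_nonneg (s0 + s ⬝ᵥ v)).trans_lt (sub_pos.1 hΔ)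
  exact pos_of_mul_pos_right hmul (one_add_dotProduct_self_pos v).le

theorem differentiableAt_spinE {H : Type*} [NormedAddCommGroup H] [NormedSpace ℝ H] (m : ℝ)
    {s0 : H → ℝ} {s v v' v'' : H → Fin 3 → ℝ} {x : H} (hs0 : DifferentiableAt ℝ s0 x)
    (hs : DifferentiableAt ℝ s x) (hv : DifferentiableAt ℝ v x) (hv' : DifferentiableAt ℝ v' x)
    (hv'' : DifferentiableAt ℝ v'' x) (hΔ : 0 < sDelta (s0 x) (s x) (v x)) :
    DifferentiableAt ℝ (fun y => spinE (s0 y) (s y) m (v y) (v' y) (v'' y)) x := by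
  have hA := one_add_dotProduct_self_pos (v x)
  have hB := spin_normSq_pos hΔ
  have hvv := differentiableAt_dotProduct hv hv
  have hss := differentiableAt_dotProduct hs hs
  have hsv := differentiableAt_dotProduct hs hv
  have hv'v := differentiableAt_dotProduct hv' hv
  have hsv' := differentiableAt_dotProduct hs hv'
  have hu : DifferentiableAt ℝ (fun y => s y - s0 y • v y) x := by fun_prop
  have hX := differentiableAt_crossProduct hv'' hu
  have hY := differentiableAt_crossProduct hv' hu
  have hD : DifferentiableAt ℝ (fun y => sDelta (s0 y) (s y) (v y)) x := by
    unfold sDelta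
    fun_prop
  have hDpow (r : ℝ) := hD.rpow_const (p := r) (Or.inl hΔ.ne')
  have hApow := (hvv.const_add 1).rpow_const (p := 3 / 2) (Or.inl hA.ne')
  have hBpow := ((hs0.fun_pow 2).fun_add hss).rpow_const (p := 3 / 2) (Or.inl hB.ne')
  have hDpow_ne (r : ℝ) := (Real.rpow_pos_of_pos hΔ r).ne'
  have hAB_ne := (mul_pos (Real.rpow_pos_of_pos hA (3 / 2)) (Real.rpow_pos_of_pos hB (3 / 2))).ne'
  unfold spinE
  fun_prop (disch := simp [*])

section Variations

variable {n q : Fin 3 → ℝ} {t : ℝ}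

theorem hasDerivAt_smul_of_covariantAction {f : ℝ → ℝ} {a : ℝ → Fin 3 → ℝ} {v r : Fin 3 → ℝ}
    {j k l ρ : ℝ} (hjk : j + k = l) (hf : HasDerivAt f (j * (q ⬝ᵥ v) * f t + ρ) t)
    (ha : HasDerivAt a (covariantAction n q v k (a t) + r) t) :
    HasDerivAt (fun τ => f τ • a τ)
      (covariantAction n q v l (f t • a t) + (ρ • a t + f t • r)) t := by
  refine (hf.fun_smul ha).congr_deriv ?_
  rw [← hjk, covariantAction_add_weight, map_smul]
  module

theorem hasDerivAt_cross_of_contravariantAction {a b : ℝ → Fin 3 → ℝ} {v r : Fin 3 → ℝ} {j k : ℝ}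
    (ha : HasDerivAt a (contravariantAction n q v j (a t) + r) t)
    (hb : HasDerivAt b (contravariantAction n q v k (b t)) t) :
    HasDerivAt (fun τ => a τ ⨯₃ b τ)
      (covariantAction n q v (j + k + 1) (a t ⨯₃ b t) + r ⨯₃ b t) t := by
  refine (hasDerivAt_crossProduct ha hb).congr_deriv ?_
  rw [← cross_contravariantAction_add, map_add, LinearMap.add_apply, add_assoc]

variable {s0 : ℝ → ℝ} {s v v' v'' : ℝ → Fin 3 → ℝ} (hs0 : HasDerivAt s0 (-(q ⬝ᵥ s t)) t)
  (hs : HasDerivAt s (s0 t • q + n ⨯₃ s t) t)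
  (hv : HasDerivAt v (q + (q ⬝ᵥ v t) • v t + n ⨯₃ v t) t)

include hv in
theorem hasDerivAt_one_add_dotProduct_self :
    HasDerivAt (fun τ => 1 + v τ ⬝ᵥ v τ) (2 * (q ⬝ᵥ v t) * (1 + v t ⬝ᵥ v t)) t := by
  refine ((hasDerivAt_dotProduct hv hv).const_add 1).congr_deriv ?_
  simp only [dotProduct_add, add_dotProduct, dotProduct_smul, smul_dotProduct, smul_eq_mul,
    dotProduct_cross_eq_neg_cross_dotProduct, dotProduct_comm (v t) q]
  ring

include hs0 hs in
theorem hasDerivAt_spin_normSq :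
    HasDerivAt (fun τ => s0 τ ^ 2 + s τ ⬝ᵥ s τ) 0 t := by
  refine ((hs0.fun_pow 2).fun_add (hasDerivAt_dotProduct hs hs)).congr_deriv ?_
  simp only [dotProduct_add, add_dotProduct, dotProduct_smul, smul_dotProduct, smul_eq_mul,
    dotProduct_cross_eq_neg_cross_dotProduct, dotProduct_comm (s t) q]
  ring

include hs0 hs hv in
theorem hasDerivAt_spin_add_dotProduct :
    HasDerivAt (fun τ => s0 τ + s τ ⬝ᵥ v τ) ((q ⬝ᵥ v t) * (s0 t + s t ⬝ᵥ v t)) t := by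
  refine (hs0.fun_add (hasDerivAt_dotProduct hs hv)).congr_deriv ?_
  simp only [dotProduct_add, add_dotProduct, dotProduct_smul, smul_dotProduct, smul_eq_mul,
    dotProduct_cross_eq_neg_cross_dotProduct, dotProduct_comm (s t) q]
  ring

include hs0 hs hv in
theorem hasDerivAt_sDelta :
    HasDerivAt (fun τ => sDelta (s0 τ) (s τ) (v τ))
      (2 * (q ⬝ᵥ v t) * sDelta (s0 t) (s t) (v t)) t := by
  refine (((hasDerivAt_one_add_dotProduct_self hv).fun_mul
    (hasDerivAt_spin_normSq hs0 hs)).fun_sub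
      ((hasDerivAt_spin_add_dotProduct hs0 hs hv).fun_pow 2)).congr_deriv ?_
  simp only [sDelta]
  ring

include hs0 hs hv in
theorem hasDerivAt_spin_sub_smul :
    HasDerivAt (fun τ => s τ - s0 τ • v τ)
      (contravariantAction n q (v t) 0 (s t - s0 t • v t)) t := by
  refine (hs.fun_sub (hs0.fun_smul hv)).congr_deriv ?_
  simp only [contravariantAction, map_sub, map_smul, dotProduct_sub, dotProduct_smul, smul_eq_mul]
  module

section Velocity

variable {k : ℝ} (hv' : HasDerivAt v' (contravariantAction n q (v t) k (v' t)) t)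

include hv hv' in
theorem hasDerivAt_dotProduct_velocity :
    HasDerivAt (fun τ => v' τ ⬝ᵥ v τ)
      ((k + 1) * (q ⬝ᵥ v t) * (v' t ⬝ᵥ v t) + (q ⬝ᵥ v' t) * (1 + v t ⬝ᵥ v t)) t := by
  refine (hasDerivAt_dotProduct hv' hv).congr_deriv ?_
  simp only [contravariantAction, dotProduct_add, add_dotProduct, dotProduct_smul, smul_dotProduct,
    smul_eq_mul, dotProduct_cross_eq_neg_cross_dotProduct, dotProduct_comm (v' t) q]
  ring

include hs hv' in
theorem hasDerivAt_spin_dotProduct :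
    HasDerivAt (fun τ => s τ ⬝ᵥ v' τ)
      (k * (q ⬝ᵥ v t) * (s t ⬝ᵥ v' t) + (q ⬝ᵥ v' t) * (s0 t + s t ⬝ᵥ v t)) t := by
  refine (hasDerivAt_dotProduct hs hv').congr_deriv ?_
  simp only [contravariantAction, dotProduct_add, add_dotProduct, dotProduct_smul, smul_dotProduct,
    smul_eq_mul, dotProduct_cross_eq_neg_cross_dotProduct]
  ring

include hs0 hs hv hv' in
theorem hasDerivAt_sDeltaHalfDeriv :
    HasDerivAt (fun τ => sDeltaHalfDeriv (s0 τ) (s τ) (v τ) (v' τ))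
      ((k + 1) * (q ⬝ᵥ v t) * sDeltaHalfDeriv (s0 t) (s t) (v t) (v' t)
        + (q ⬝ᵥ v' t) * sDelta (s0 t) (s t) (v t)) t := by
  refine (((hasDerivAt_spin_normSq hs0 hs).fun_mul
    (hasDerivAt_dotProduct_velocity hv hv')).fun_sub
      ((hasDerivAt_spin_add_dotProduct hs0 hs hv).fun_mul
        (hasDerivAt_spin_dotProduct hs hv'))).congr_deriv ?_
  simp only [sDeltaHalfDeriv, sDelta]
  ring

include hv hv' in
theorem hasDerivAt_lowerIndex :
    HasDerivAt (fun τ => lowerIndex (v τ) (v' τ))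
      (covariantAction n q (v t) (k + 2) (lowerIndex (v t) (v' t))) t := by
  refine (((hasDerivAt_one_add_dotProduct_self hv).fun_smul hv').fun_sub
    ((hasDerivAt_dotProduct_velocity hv hv').fun_smul hv)).congr_deriv ?_
  simp only [lowerIndex, contravariantAction, covariantAction_apply, map_sub, map_smul,
    dotProduct_comm (v t) (v' t)]
  module

end Velocity

include hs0 hs hv in
theorem hasDerivAt_mass_coefficient (m : ℝ) (hB : 0 < s0 t ^ 2 + s t ⬝ᵥ s t) :
    HasDerivAt (fun τ => m / ((1 + v τ ⬝ᵥ v τ) ^ ((3 : ℝ) / 2)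
        * (s0 τ ^ 2 + s τ ⬝ᵥ s τ) ^ ((3 : ℝ) / 2)))
      (-3 * (q ⬝ᵥ v t) * (m / ((1 + v t ⬝ᵥ v t) ^ ((3 : ℝ) / 2)
        * (s0 t ^ 2 + s t ⬝ᵥ s t) ^ ((3 : ℝ) / 2)))) t := by
  have hA := one_add_dotProduct_self_pos (v t)
  have hApow := hasDerivAt_rpow_of_mul_self (hasDerivAt_one_add_dotProduct_self hv) hA.ne' (3 / 2)
  have hBpow := (hasDerivAt_spin_normSq hs0 hs).rpow_const (p := 3 / 2) (Or.inl hB.ne')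
  have hAB : HasDerivAt (fun τ => (1 + v τ ⬝ᵥ v τ) ^ ((3 : ℝ) / 2)
        * (s0 τ ^ 2 + s τ ⬝ᵥ s τ) ^ ((3 : ℝ) / 2))
      (3 * (q ⬝ᵥ v t) * ((1 + v t ⬝ᵥ v t) ^ ((3 : ℝ) / 2)
        * (s0 t ^ 2 + s t ⬝ᵥ s t) ^ ((3 : ℝ) / 2))) t :=
    (hApow.fun_mul hBpow).congr_deriv (by ring)
  have hAB_ne := (mul_pos (Real.rpow_pos_of_pos hA (3 / 2)) (Real.rpow_pos_of_pos hB (3 / 2))).ne'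
  exact ((hasDerivAt_inv_of_mul_self hAB hAB_ne).const_mul m).congr_deriv (by ring)

variable (hv' : HasDerivAt v' (contravariantAction n q (v t) 2 (v' t)) t)
  (hΔ : 0 < sDelta (s0 t) (s t) (v t))

include hs0 hs hv hΔ in
theorem hasDerivAt_inv_sDelta_rpow (r : ℝ) :
    HasDerivAt (fun τ => (sDelta (s0 τ) (s τ) (v τ) ^ r)⁻¹)
      (-(2 * r) * (q ⬝ᵥ v t) * (sDelta (s0 t) (s t) (v t) ^ r)⁻¹) t :=
  (hasDerivAt_inv_of_mul_self
    (hasDerivAt_rpow_of_mul_self (hasDerivAt_sDelta hs0 hs hv) hΔ.ne' r)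
    (Real.rpow_pos_of_pos hΔ r).ne').congr_deriv (by ring)

include hs0 hs hv hv' hΔ in
theorem hasDerivAt_sDeltaHalfDeriv_div_rpow :
    HasDerivAt (fun τ => 3 * sDeltaHalfDeriv (s0 τ) (s τ) (v τ) (v' τ)
        / sDelta (s0 τ) (s τ) (v τ) ^ ((5 : ℝ) / 2))
      (-2 * (q ⬝ᵥ v t) * (3 * sDeltaHalfDeriv (s0 t) (s t) (v t) (v' t)
          / sDelta (s0 t) (s t) (v t) ^ ((5 : ℝ) / 2))
        + 3 * (q ⬝ᵥ v' t) * (sDelta (s0 t) (s t) (v t) ^ ((3 : ℝ) / 2))⁻¹) t := by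
  have hpow : sDelta (s0 t) (s t) (v t) ^ ((5 : ℝ) / 2)
      = sDelta (s0 t) (s t) (v t) ^ ((3 : ℝ) / 2) * sDelta (s0 t) (s t) (v t) := by
    rw [← Real.rpow_add_one hΔ.ne']
    norm_num
  refine (((hasDerivAt_sDeltaHalfDeriv hs0 hs hv hv').const_mul 3).fun_mul
    (hasDerivAt_inv_sDelta_rpow hs0 hs hv hΔ (5 / 2))).congr_deriv ?_
  have hpow_ne := (Real.rpow_pos_of_pos hΔ (3 / 2)).ne'
  rw [hpow]
  field

include hs0 hs hv hv' hΔ in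
theorem hasDerivAt_spinE (m : ℝ)
    (hv'' : HasDerivAt v''
      (contravariantAction n q (v t) 3 (v'' t) + (3 * (q ⬝ᵥ v' t)) • v' t) t) :
    HasDerivAt (fun τ => spinE (s0 τ) (s τ) m (v τ) (v' τ) (v'' τ))
      (covariantAction n q (v t) 1 (spinE (s0 t) (s t) m (v t) (v' t) (v'' t))) t := by
  have hu := hasDerivAt_spin_sub_smul hs0 hs hv
  have hX := hasDerivAt_smul_of_covariantAction (l := 1) (ρ := 0) (by norm_num)
    ((hasDerivAt_inv_sDelta_rpow hs0 hs hv hΔ (3 / 2)).congr_deriv (add_zero _).symm)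
    (hasDerivAt_cross_of_contravariantAction hv'' hu)
  have hY := hasDerivAt_smul_of_covariantAction (l := 1) (by norm_num)
    (hasDerivAt_sDeltaHalfDeriv_div_rpow hs0 hs hv hv' hΔ)
    (hasDerivAt_cross_of_contravariantAction (r := 0) (hv'.congr_deriv (add_zero _).symm) hu)
  have hZ := hasDerivAt_smul_of_covariantAction (l := 1) (ρ := 0) (r := 0) (by norm_num)
    ((hasDerivAt_mass_coefficient hs0 hs hv m (spin_normSq_pos hΔ)).congr_deriv (add_zero _).symm)
    ((hasDerivAt_lowerIndex hv hv').congr_deriv (add_zero _).symm)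
  simp only [spinE_eq]
  refine ((hX.fun_sub hY).fun_add hZ).congr_deriv ?_
  simp only [map_add, map_sub, map_smul, map_zero, LinearMap.smul_apply, LinearMap.zero_apply]
  module

end Variations

theorem hasDerivAt_spinE_of_X3vec (m : ℝ) {n q : Fin 3 → ℝ} {t : ℝ}
    {γ : ℝ → ℝ × (Fin 3 → ℝ) × (Fin 3 → ℝ) × (Fin 3 → ℝ) × (Fin 3 → ℝ)}
    (hγ : HasDerivAt γ (X3vec n q (γ t)) t) (hΔ : 0 < sDelta (γ t).1 (γ t).2.1 (γ t).2.2.1) :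
    HasDerivAt
      (fun τ => spinE (γ τ).1 (γ τ).2.1 m (γ τ).2.2.1 (γ τ).2.2.2.1 (γ τ).2.2.2.2)
      (covariantAction n q (γ t).2.2.1 1
        (spinE (γ t).1 (γ t).2.1 m (γ t).2.2.1 (γ t).2.2.2.1 (γ t).2.2.2.2)) t := by
  have hγ_s := hasDerivAt_snd_comp hγ
  have hγ_v := hasDerivAt_snd_comp hγ_s
  have hγ_v' := hasDerivAt_snd_comp hγ_v
  have hv' : HasDerivAt (fun τ => (γ τ).2.2.2.1)
      (contravariantAction n q (γ t).2.2.1 2 (γ t).2.2.2.1) t :=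
    (hasDerivAt_fst_comp hγ_v').congr_deriv (by simp only [X3vec, contravariantAction]; abel)
  have hv'' : HasDerivAt (fun τ => (γ τ).2.2.2.2)
      (contravariantAction n q (γ t).2.2.1 3 (γ t).2.2.2.2
        + (3 * (q ⬝ᵥ (γ t).2.2.2.1)) • (γ t).2.2.2.1) t :=
    (hasDerivAt_snd_comp hγ_v').congr_deriv (by simp only [X3vec, contravariantAction]; abel)
  exact hasDerivAt_spinE (hasDerivAt_fst_comp hγ) (hasDerivAt_fst_comp hγ_s)
    (hasDerivAt_fst_comp hγ_v) hv' hΔ m hv''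

/-- Invariance of the spinning-particle equation (35) under the
prolonged pseudo-orthogonal generators: on the domain `{(s⁰,𝐬) ≠ 0, Δ(v) > 0}` the
expression `𝐄` of (35), viewed as a function of `(s⁰, 𝐬, v, v′, v″)`, satisfies
`X₃𝐄 = 𝐧×𝐄 + (𝐪·v) 𝐄 − (v·𝐄) 𝐪` for every choice of group parameters `(𝐧, 𝐪)`. -/
theorem spinning_particle_equation_invariance (m : ℝ) (n q : Fin 3 → ℝ)
    (s0 : ℝ) (s v v' v'' : Fin 3 → ℝ)
    (hs : (s0, s) ≠ 0) (hΔ : 0 < sDelta s0 s v) :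
    fderiv ℝ
      (fun p : ℝ × (Fin 3 → ℝ) × (Fin 3 → ℝ) × (Fin 3 → ℝ) × (Fin 3 → ℝ) =>
        spinE p.1 p.2.1 m p.2.2.1 p.2.2.2.1 p.2.2.2.2)
      (s0, s, v, v', v'') (X3vec n q (s0, s, v, v', v''))
      = crossProduct n (spinE s0 s m v v' v'')
        + (q ⬝ᵥ v) • spinE s0 s m v v' v''
        - (v ⬝ᵥ spinE s0 s m v v' v'') • q := by
  refine fderiv_apply_eq_of_forall_curve (differentiableAt_spinE m (by fun_prop) (by fun_prop)
    (by fun_prop) (by fun_prop) (by fun_prop) hΔ) fun γ hγ₀ hγ => ?_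
  rw [← hγ₀] at hγ
  simpa [hγ₀, covariantAction_apply] using hasDerivAt_spinE_of_X3vec m hγ (by rwa [hγ₀])

end
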